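/- Fix an integer r ≥ 1. Then R̃_2(rK_2; 3r − 1) ≤ 3r − 2. Equivalently: Builder has a strategy that, playing on K_{3r−1} with 2 colors, guarantees within 3r − 2 moves that some color class contains r pairwise disjoint edges, against every Painter strategy. -/

import Mathlib

open Finset

/-- Two edges of a complete graph (elements of `Sym2 (Fin n)`) are disjoint if they
share no vertex. -/
def EdgeDisjoint {n : ℕ} (e f : Sym2 (Fin n)) : Prop := ∀ v, v ∈ e → v ∉ f

/-- A finite set of elements of `Sym2 (Fin n)` is a matching if each element is a genuine
(non-loop) edge and the edges are pairwise disjoint. -/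
def IsMatchingIn {n : ℕ} (M : Finset (Sym2 (Fin n))) : Prop :=
  (∀ e ∈ M, ¬ e.IsDiag) ∧ (M : Set (Sym2 (Fin n))).Pairwise EdgeDisjoint

/-- A history of the online Ramsey game on `K_n` with `t` colours: the list of
edges played so far, each together with the colour Painter gave it. -/
abbrev GameHistory (n t : ℕ) := List (Sym2 (Fin n) × Fin t)

/-- A Builder strategy: given the history so far, select the next edge. -/
abbrev BuilderStrategy (n t : ℕ) := GameHistory n t → Sym2 (Fin n)

/-- A Painter strategy: given the history so far and the newly selected edge,
choose a colour for it. -/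
abbrev PainterStrategy (n t : ℕ) := GameHistory n t → Sym2 (Fin n) → Fin t

/-- The history after `k` moves when Builder plays strategy `B` against Painter
strategy `P`. -/
def gamePlay {n t : ℕ} (B : BuilderStrategy n t) (P : PainterStrategy n t) :
    ℕ → GameHistory n t
  | 0 => []
  | k + 1 =>
      let h := gamePlay B P k
      h ++ [(B h, P h (B h))]

/-- Builder plays legally for the first `k` moves against `P`: every selected edge
is a genuine (non-loop) edge not selected before. -/
def BuilderValid {n t : ℕ} (B : BuilderStrategy n t) (P : PainterStrategy n t)
    (k : ℕ) : Prop :=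
  ∀ j < k, ¬ (B (gamePlay B P j)).IsDiag ∧
    B (gamePlay B P j) ∉ (gamePlay B P j).map Prod.fst

/-- The history `h` contains, for some colour `i`, a matching of `r i` edges all
coloured `i`. -/
def HistoryHasMatching (n t : ℕ) (r : Fin t → ℕ) (h : GameHistory n t) : Prop :=
  ∃ i : Fin t, ∃ M : Finset (Sym2 (Fin n)),
    M.card = r i ∧ IsMatchingIn M ∧ ∀ e ∈ M, (e, i) ∈ h

/-- Builder can force, within `k` legal moves on `K_n` with `t` colours, some colour
`i` to contain a matching of `r i` edges, against every Painter strategy. -/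
def BuilderWinsIn (n t : ℕ) (r : Fin t → ℕ) (k : ℕ) : Prop :=
  ∃ B : BuilderStrategy n t, (∀ P : PainterStrategy n t, BuilderValid B P k) ∧
    ∀ P : PainterStrategy n t, HistoryHasMatching n t r (gamePlay B P k)

/-- The restricted online Ramsey number `R̃(r₁K₂,…,r_tK₂; n)`: the least `k` such
that Builder can force a win within `k` moves. -/
noncomputable def restrictedOnlineRamsey (n t : ℕ) (r : Fin t → ℕ) : ℕ :=
  sInf {k | BuilderWinsIn n t r k}

/-- A colouring `c` of (the edges of) `K_N` with `t` colours contains, for some colour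
`i`, a matching of `r i` edges all coloured `i`. -/
def ColoringHasMatching (N t : ℕ) (r : Fin t → ℕ) (c : Sym2 (Fin N) → Fin t) : Prop :=
  ∃ i : Fin t, ∃ M : Finset (Sym2 (Fin N)),
    M.card = r i ∧ IsMatchingIn M ∧ ∀ e ∈ M, c e = i

/-- The classical Ramsey number `R(r₁K₂,…,r_tK₂)`: the least `N` such that every
`t`-colouring of the edges of `K_N` contains, for some `i`, a matching of `r i`
edges in colour `i`. -/
noncomputable def matchingRamsey (t : ℕ) (r : Fin t → ℕ) : ℕ :=
  sInf {N | ∀ c : Sym2 (Fin N) → Fin t, ColoringHasMatching N t r c}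

/-!
Builder grows a path of one colour, each time joining a new vertex `w` to the end `v` of the path.
If Painter repeats the colour, the path gets longer. Otherwise `w`, `v` and the next vertex `u` of
the path form a block: `wv` and `vu` have the two different colours, so setting the three vertices
aside adds one edge to a matching in each colour, and the rest of the path is kept. After `j` blocks
the path vertices still supply half their number of disjoint edges in the colour of the path. So
once `2 * max (r 0) (r 1) + min (r 0) (r 1) - 1` vertices have been used, either
`j ≥ min (r 0) (r 1)` or the colour of the path has `max (r 0) (r 1)` disjoint edges, and Builder
has won. The first edge uses two vertices and every later one at least one new vertex.
-/

section Game

variable {n t : ℕ} {r : Fin t → ℕ} {h : GameHistory n t}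

/-- `e` may be selected after the history `h`: it is an edge and was not selected before. This is
the condition that `BuilderValid` puts on a single move. -/
def IsLegalMove (h : GameHistory n t) (e : Sym2 (Fin n)) : Prop :=
  ¬ e.IsDiag ∧ e ∉ h.map Prod.fst

/-- From the history `h`, Builder can force a win with `k` further legal moves. The number of moves
is exact, as in `BuilderWinsIn`, but the strategies are replaced by backward induction on `k`. -/
def BuilderForces (r : Fin t → ℕ) : ℕ → GameHistory n t → Prop
  | 0, h => HistoryHasMatching n t r h
  | k + 1, h => ∃ e, IsLegalMove h e ∧ ∀ c, BuilderForces r k (h ++ [(e, c)])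

theorem length_gamePlay (B : BuilderStrategy n t) (P : PainterStrategy n t) (k : ℕ) :
    (gamePlay B P k).length = k := by
  induction k with
  | zero => rfl
  | succ k ih => simp [gamePlay, ih]

theorem BuilderForces.builderWinsIn [NeZero n] {k : ℕ}
    (hforces : BuilderForces r k ([] : GameHistory n t)) : BuilderWinsIn n t r k := by
  have exists_move (h : GameHistory n t) : ∃ e, ∀ m, h.length + (m + 1) = k →
      BuilderForces r (m + 1) h →
        IsLegalMove h e ∧ ∀ c, BuilderForces r m (h ++ [(e, c)]) := by
    by_cases hwin : ∃ m, h.length + (m + 1) = k ∧ BuilderForces r (m + 1) h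
    · obtain ⟨m, hm, e, he⟩ := hwin
      refine ⟨e, fun m' hm' _ => ?_⟩
      obtain rfl : m' = m := by omega
      exact he
    · exact ⟨s(0, 0), fun m hm hforces => absurd ⟨m, hm, hforces⟩ hwin⟩
  choose B hB using exists_move
  have forces_gamePlay (P : PainterStrategy n t) (j : ℕ) :
      ∀ m, j + m = k → BuilderForces r m (gamePlay B P j) := by
    induction j with
    | zero =>
      rintro m rfl
      simpa [gamePlay] using hforces
    | succ j ih =>
      intro m hm
      exact (hB _ m (by rw [length_gamePlay]; omega) (ih (m + 1) (by omega))).2 _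
  refine ⟨B, fun P j hj => ?_, fun P => forces_gamePlay P k 0 rfl⟩
  obtain ⟨m, hm⟩ := Nat.exists_eq_add_of_lt hj
  exact (hB _ m (by rw [length_gamePlay]; omega) (forces_gamePlay P j (m + 1) (by omega))).1

theorem exists_isLegalMove (hlt : h.length < n.choose 2) : ∃ e, IsLegalMove h e := by
  have hcard : #(h.map Prod.fst).toFinset < #{e : Sym2 (Fin n) | ¬ e.IsDiag} := by
    calc #(h.map Prod.fst).toFinset ≤ (h.map Prod.fst).length := List.toFinset_card_le _
      _ = h.length := List.length_map _
      _ < n.choose 2 := hlt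
      _ = #{e : Sym2 (Fin n) | ¬ e.IsDiag} := by
        rw [← Fintype.card_subtype, Sym2.card_subtype_not_diag, Fintype.card_fin]
  obtain ⟨e, he, hnew⟩ := exists_mem_notMem_of_card_lt_card hcard
  exact ⟨e, (mem_filter.1 he).2, fun hmem => hnew (List.mem_toFinset.2 hmem)⟩

theorem HistoryHasMatching.append (hh : HistoryHasMatching n t r h) (h' : GameHistory n t) :
    HistoryHasMatching n t r (h ++ h') := by
  obtain ⟨i, M, hcard, hM, hcol⟩ := hh
  exact ⟨i, M, hcard, hM, fun e he => List.mem_append_left _ (hcol e he)⟩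

theorem HistoryHasMatching.builderForces (hh : HistoryHasMatching n t r h) {k : ℕ}
    (hk : h.length + k ≤ n.choose 2) : BuilderForces r k h := by
  induction k generalizing h with
  | zero => exact hh
  | succ k ih =>
    obtain ⟨e, he⟩ := exists_isLegalMove (h := h) (by omega)
    refine ⟨e, he, fun c => ih (hh.append _) ?_⟩
    rw [List.length_append, List.length_singleton]
    omega

end Game

section Matching

variable {n t : ℕ} {h : GameHistory n t} {i : Fin t} {j : ℕ} {q : List (Fin n)}

theorem EdgeDisjoint.symm {e f : Sym2 (Fin n)} (hef : EdgeDisjoint e f) : EdgeDisjoint f e :=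
  fun v hf he => hef v he hf

theorem IsMatchingIn.insert {M : Finset (Sym2 (Fin n))} (hM : IsMatchingIn M) {e : Sym2 (Fin n)}
    (he : ¬ e.IsDiag) (hd : ∀ f ∈ M, EdgeDisjoint e f) : IsMatchingIn (insert e M) := by
  refine ⟨forall_mem_insert _ _ _ |>.2 ⟨he, hM.1⟩, ?_⟩
  rw [coe_insert]
  exact hM.2.insert fun f hf _ => ⟨hd f hf, (hd f hf).symm⟩

/-- The history `h` contains `j` pairwise disjoint edges of colour `i` with all endpoints in the
list `q`. -/
def HasMatchingOn (h : GameHistory n t) (i : Fin t) (j : ℕ) (q : List (Fin n)) : Prop :=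
  ∃ M : Finset (Sym2 (Fin n)), #M = j ∧ IsMatchingIn M ∧ ∀ e ∈ M, (e, i) ∈ h ∧ ∀ v ∈ e, v ∈ q

theorem hasMatchingOn_zero (h : GameHistory n t) (i : Fin t) (q : List (Fin n)) :
    HasMatchingOn h i 0 q :=
  ⟨∅, card_empty, by simp [IsMatchingIn], by simp⟩

theorem HasMatchingOn.mono (hm : HasMatchingOn h i j q) {h' : GameHistory n t} (hh : h ⊆ h')
    {q' : List (Fin n)} (hq : q ⊆ q') : HasMatchingOn h' i j q' := by
  obtain ⟨M, hcard, hM, hcol⟩ := hm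
  exact ⟨M, hcard, hM, fun e he => ⟨hh (hcol e he).1, fun v hv => hq ((hcol e he).2 v hv)⟩⟩

theorem HasMatchingOn.cons_cons (hm : HasMatchingOn h i j q) {a b : Fin n} (hab : a ≠ b)
    (ha : a ∉ q) (hb : b ∉ q) (hcol : (s(a, b), i) ∈ h) :
    HasMatchingOn h i (j + 1) (a :: b :: q) := by
  obtain ⟨M, rfl, hM, hMq⟩ := hm
  have hdisj : ∀ f ∈ M, EdgeDisjoint s(a, b) f := by
    intro f hf v hv hvf
    rcases Sym2.mem_iff.1 hv with rfl | rfl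
    exacts [ha ((hMq f hf).2 _ hvf), hb ((hMq f hf).2 _ hvf)]
  have hnew : s(a, b) ∉ M := fun hmem => ha ((hMq _ hmem).2 a (Sym2.mem_mk_left a b))
  refine ⟨insert s(a, b) M, card_insert_of_notMem hnew, hM.insert (by simpa using hab) hdisj, ?_⟩
  refine (forall_mem_insert _ _ _).2 ⟨⟨hcol, by simp⟩, fun f hf => ⟨(hMq f hf).1, fun v hv => ?_⟩⟩
  exact List.mem_cons_of_mem _ (List.mem_cons_of_mem _ ((hMq f hf).2 v hv))

theorem HasMatchingOn.append_path : ∀ {p q : List (Fin n)} {j : ℕ}, HasMatchingOn h i j q →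
    (p ++ q).Nodup → p.IsChain (fun a b => (s(a, b), i) ∈ h) →
    HasMatchingOn h i (j + p.length / 2) (p ++ q)
  | [], _, _, hm, _, _ => by simpa using hm
  | [_], _, _, hm, _, _ => by
    simpa using hm.mono (List.Subset.refl _) (List.subset_cons_self _ _)
  | a :: b :: p, q, j, hm, hnodup, hchain => by
    have hperm : ((a :: b :: p) ++ q).Perm (p ++ (a :: b :: q)) :=
      List.perm_append_comm_assoc [a, b] p q
    obtain ⟨hab, hpath⟩ := List.isChain_cons_cons.1 hchain
    have hblock : HasMatchingOn h i (j + 1) (a :: b :: q) := by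
      simp only [List.cons_append, List.nodup_cons, List.mem_cons, List.mem_append, not_or]
        at hnodup
      exact hm.cons_cons hnodup.1.1 hnodup.1.2.2 hnodup.2.1.2 hab
    have hrest := hblock.append_path (hperm.nodup_iff.1 hnodup) hpath.tail
    have hlength : j + 1 + p.length / 2 = j + (a :: b :: p).length / 2 := by
      simp only [List.length_cons]
      omega
    exact hlength ▸ hrest.mono (List.Subset.refl _) hperm.symm.subset

theorem HasMatchingOn.historyHasMatching {r : Fin t → ℕ} (hm : HasMatchingOn h i j q)
    (hj : r i ≤ j) : HistoryHasMatching n t r h := by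
  obtain ⟨M, rfl, hM, hcol⟩ := hm
  obtain ⟨M', hsub, hcard⟩ := exists_subset_card_eq hj
  exact ⟨i, M', hcard, ⟨fun e he => hM.1 e (hsub he), hM.2.mono (coe_subset.2 hsub)⟩,
    fun e he => (hcol e (hsub he)).1⟩

end Matching

theorem exists_notMem_of_length_lt_card {α : Type*} [Fintype α] {l : List α}
    (hl : l.length < Fintype.card α) : ∃ a, a ∉ l := by
  classical
  obtain ⟨a, -, ha⟩ := exists_mem_notMem_of_card_lt_card (s := l.toFinset) (t := univ)
    ((List.toFinset_card_le l).trans_lt hl)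
  exact ⟨a, fun hmem => ha (List.mem_toFinset.2 hmem)⟩

section Strategy

variable {n : ℕ} {h : GameHistory n 2} {j : ℕ} {p q : List (Fin n)} {c : Fin 2} {u v w : Fin n}

/-- The positions that Builder's strategy goes through: `p` is the current path, in colour `c` and
with its growing end first, and `q` lists the vertices of the `j` blocks set aside so far. Every
edge played lies within `p ++ q`. -/
structure PathBlockPosition (h : GameHistory n 2) (j : ℕ) (p q : List (Fin n)) (c : Fin 2) :
    Prop where
  nodup : (p ++ q).Nodup
  length_blocks : q.length = 3 * j
  hasMatchingOn : ∀ i, HasMatchingOn h i j q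
  isChain : p.IsChain (fun a b => (s(a, b), c) ∈ h)
  mem_of_played : ∀ x ∈ h, ∀ y ∈ x.1, y ∈ p ++ q
  length_lt : h.length < (p ++ q).length

namespace PathBlockPosition

theorem singleton (v : Fin n) (c : Fin 2) : PathBlockPosition [] 0 [v] [] c where
  nodup := List.nodup_singleton v
  length_blocks := rfl
  hasMatchingOn i := hasMatchingOn_zero _ i _
  isChain := List.isChain_singleton v
  mem_of_played := by simp
  length_lt := Nat.zero_lt_one

theorem start_path (hpos : PathBlockPosition h j [] q c) (hw : w ∉ q) :
    PathBlockPosition h j [w] q c where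
  nodup := List.nodup_cons.2 ⟨hw, hpos.nodup⟩
  length_blocks := hpos.length_blocks
  hasMatchingOn := hpos.hasMatchingOn
  isChain := List.isChain_singleton w
  mem_of_played x hx y hy := List.mem_cons_of_mem _ (hpos.mem_of_played x hx y hy)
  length_lt := hpos.length_lt.trans (Nat.lt_succ_self _)

theorem recolour_singleton (hpos : PathBlockPosition h j [v] q c) (c' : Fin 2) :
    PathBlockPosition h j [v] q c' :=
  { hpos with isChain := List.isChain_singleton v }

theorem isLegalMove (hpos : PathBlockPosition h j (v :: p) q c) (hw : w ∉ (v :: p) ++ q) :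
    IsLegalMove h s(w, v) := by
  refine ⟨fun hdiag => hw ?_, fun hmem => hw ?_⟩
  · rw [Sym2.mk_isDiag_iff] at hdiag
    exact hdiag ▸ List.mem_cons_self
  · obtain ⟨x, hx, hedge⟩ := List.mem_map.1 hmem
    exact hpos.mem_of_played x hx w (hedge ▸ Sym2.mem_mk_left w v)

theorem mem_of_played_append (hpos : PathBlockPosition h j (v :: p) q c) (w : Fin n) (c' : Fin 2) :
    ∀ x ∈ h ++ [(s(w, v), c')], ∀ y ∈ x.1, y ∈ w :: (v :: p) ++ q := by
  intro x hx y hy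
  rcases List.mem_append.1 hx with hx | hx
  · exact List.mem_cons_of_mem _ (hpos.mem_of_played x hx y hy)
  · rw [List.mem_singleton.1 hx, Sym2.mem_iff] at hy
    rcases hy with rfl | rfl <;> simp

theorem extend_path (hpos : PathBlockPosition h j (v :: p) q c) (hw : w ∉ (v :: p) ++ q) :
    PathBlockPosition (h ++ [(s(w, v), c)]) j (w :: v :: p) q c where
  nodup := List.nodup_cons.2 ⟨hw, hpos.nodup⟩
  length_blocks := hpos.length_blocks
  hasMatchingOn i := (hpos.hasMatchingOn i).mono (List.subset_append_left _ _) (List.Subset.refl _)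
  isChain := List.isChain_cons_cons.2
    ⟨by simp, hpos.isChain.imp fun _ _ hab => List.mem_append_left _ hab⟩
  mem_of_played := hpos.mem_of_played_append w c
  length_lt := by simpa using hpos.length_lt

theorem hasMatchingOn_block (hpos : PathBlockPosition h j (v :: u :: p) q c)
    (hw : w ∉ (v :: u :: p) ++ q) {c' : Fin 2} (hc : c' ≠ c) (i : Fin 2) :
    HasMatchingOn (h ++ [(s(w, v), c')]) i (j + 1) (w :: v :: u :: q) := by
  have hm : HasMatchingOn (h ++ [(s(w, v), c')]) i j q :=
    (hpos.hasMatchingOn i).mono (List.subset_append_left _ _) (List.Subset.refl _)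
  have hnodup := hpos.nodup
  simp only [List.cons_append, List.nodup_cons, List.mem_cons, List.mem_append, not_or]
    at hnodup hw
  obtain ⟨⟨hvu, -, hvq⟩, ⟨-, huq⟩, -⟩ := hnodup
  obtain ⟨hwv, -, -, hwq⟩ := hw
  obtain rfl | rfl : i = c ∨ i = c' := by omega
  · have hcol : (s(v, u), i) ∈ h ++ [(s(w, v), c')] :=
      List.mem_append_left _ (List.isChain_cons_cons.1 hpos.isChain).1
    exact (hm.cons_cons hvu hvq huq hcol).mono (List.Subset.refl _) (List.subset_cons_self _ _)
  · have hcol : (s(w, v), i) ∈ h ++ [(s(w, v), i)] := by simp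
    refine (hm.cons_cons hwv hwq hvq hcol).mono (List.Subset.refl _) ?_
    exact List.cons_subset_cons _ (List.cons_subset_cons _ (List.subset_cons_self _ _))

theorem close_block (hpos : PathBlockPosition h j (v :: u :: p) q c)
    (hw : w ∉ (v :: u :: p) ++ q) {c' : Fin 2} (hc : c' ≠ c) :
    PathBlockPosition (h ++ [(s(w, v), c')]) (j + 1) p (w :: v :: u :: q) c := by
  have hperm : ((w :: v :: u :: p) ++ q).Perm (p ++ (w :: v :: u :: q)) :=
    List.perm_append_comm_assoc [w, v, u] p q
  exact
  { nodup := hperm.nodup_iff.1 (List.nodup_cons.2 ⟨hw, hpos.nodup⟩)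
    length_blocks := by simp only [List.length_cons, hpos.length_blocks]; ring
    hasMatchingOn := hpos.hasMatchingOn_block hw hc
    isChain := (List.isChain_cons_cons.1 hpos.isChain).2.tail.imp
      fun _ _ hab => List.mem_append_left _ hab
    mem_of_played := fun x hx y hy =>
      hperm.subset (hpos.mem_of_played_append w c' x hx y hy)
    length_lt := by rw [← hperm.length_eq]; simpa using hpos.length_lt }

theorem exists_append (hpos : PathBlockPosition h j (v :: p) q c) (hw : w ∉ (v :: p) ++ q)
    (c' : Fin 2) :
    ∃ j' p' q', ∃ d : Fin 2, PathBlockPosition (h ++ [(s(w, v), c')]) j' p' q' d := by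
  obtain rfl | hc := eq_or_ne c' c
  · exact ⟨_, _, _, _, hpos.extend_path hw⟩
  cases p with
  | nil => exact ⟨_, _, _, _, (hpos.recolour_singleton c').extend_path hw⟩
  | cons u p => exact ⟨_, _, _, _, hpos.close_block hw hc⟩

theorem historyHasMatching {r : Fin 2 → ℕ} (hpos : PathBlockPosition h j p q c)
    (hlen : 2 * max (r 0) (r 1) + min (r 0) (r 1) ≤ (p ++ q).length + 1) :
    HistoryHasMatching n 2 r h := by
  by_cases hj : ∃ i, r i ≤ j
  · obtain ⟨i, hi⟩ := hj
    exact (hpos.hasMatchingOn i).historyHasMatching hi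
  · have hlt (i : Fin 2) : j < r i := not_le.1 (not_exists.1 hj i)
    have hmin : j < min (r 0) (r 1) := lt_min (hlt 0) (hlt 1)
    have hmax : r c ≤ max (r 0) (r 1) := by fin_cases c <;> simp
    rw [List.length_append, hpos.length_blocks] at hlen
    have hpath : max (r 0) (r 1) ≤ j + p.length / 2 := by omega
    exact ((hpos.hasMatchingOn c).append_path hpos.nodup hpos.isChain).historyHasMatching
      (hmax.trans hpath)

theorem exists_cons (hpos : PathBlockPosition h j p q c) (hlen : (p ++ q).length < n) :
    ∃ v p', PathBlockPosition h j (v :: p') q c := by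
  cases p with
  | nil =>
    obtain ⟨w, hw⟩ : ∃ w, w ∉ q := exists_notMem_of_length_lt_card (by simpa using hlen)
    exact ⟨w, [], hpos.start_path hw⟩
  | cons v p => exact ⟨v, p, hpos⟩

theorem builderForces_of_lt_length {r : Fin 2 → ℕ} {k : ℕ} (hpos : PathBlockPosition h j p q c)
    (hr : 2 * max (r 0) (r 1) + min (r 0) (r 1) ≤ h.length + k + 2) (hn : h.length + k < n)
    (hlt : h.length + k < (p ++ q).length) : BuilderForces r k h := by
  refine (hpos.historyHasMatching (by omega)).builderForces ?_
  calc h.length + k ≤ (h.length + k + 1).choose 2 := by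
        rw [Nat.choose_succ_succ', Nat.choose_one_right]
        exact Nat.le_add_right _ _
    _ ≤ n.choose 2 := Nat.choose_le_choose 2 hn

theorem builderForces {r : Fin 2 → ℕ} {k : ℕ} (hpos : PathBlockPosition h j p q c)
    (hr : 2 * max (r 0) (r 1) + min (r 0) (r 1) ≤ h.length + k + 2) (hn : h.length + k < n) :
    BuilderForces r k h := by
  induction k generalizing h j p q c with
  | zero => exact hpos.builderForces_of_lt_length hr hn hpos.length_lt
  | succ k ih =>
    by_cases hlt : h.length + (k + 1) < (p ++ q).length
    · exact hpos.builderForces_of_lt_length hr hn hlt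
    obtain ⟨v, p, hpos⟩ := hpos.exists_cons (by omega)
    by_cases hlt' : h.length + (k + 1) < ((v :: p) ++ q).length
    · exact hpos.builderForces_of_lt_length hr hn hlt'
    obtain ⟨w, hw⟩ : ∃ w, w ∉ (v :: p) ++ q :=
      exists_notMem_of_length_lt_card (by rw [Fintype.card_fin]; omega)
    refine ⟨s(w, v), hpos.isLegalMove hw, fun c' => ?_⟩
    obtain ⟨_, _, _, _, hpos'⟩ := hpos.exists_append hw c'
    have hlength : (h ++ [(s(w, v), c')]).length + k = h.length + (k + 1) := by
      rw [List.length_append, List.length_singleton, add_assoc, add_comm 1 k]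
    exact ih hpos' (by rwa [hlength]) (by rwa [hlength])

end PathBlockPosition

end Strategy

theorem builderWinsIn_two_colours {n k : ℕ} {r : Fin 2 → ℕ}
    (hr : 2 * max (r 0) (r 1) + min (r 0) (r 1) ≤ k + 2) (hn : k < n) :
    BuilderWinsIn n 2 r k := by
  have : NeZero n := ⟨by omega⟩
  have hforces : BuilderForces r k ([] : GameHistory n 2) :=
    (PathBlockPosition.singleton 0 0).builderForces (by simpa using hr) (by simpa using hn)
  exact hforces.builderWinsIn

theorem restrictedOnlineRamsey_two_colours_upper_general {n : ℕ} {r : Fin 2 → ℕ}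
    (hn : 2 * max (r 0) (r 1) + min (r 0) (r 1) - 2 < n) :
    restrictedOnlineRamsey n 2 r ≤ 2 * max (r 0) (r 1) + min (r 0) (r 1) - 2 :=
  Nat.sInf_le (builderWinsIn_two_colours (by omega) hn)

/-- For `r ≥ 1`, `R̃₂(rK₂; 3r − 1) ≤ 3r − 2`. -/
theorem restrictedOnlineRamsey_two_colours_upper (r : ℕ) (hr : 1 ≤ r) :
    restrictedOnlineRamsey (3 * r - 1) 2 (fun _ => r) ≤ 3 * r - 2 := by
  have hmoves : 2 * max r r + min r r - 2 = 3 * r - 2 := by rw [max_self, min_self]; omega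
  exact hmoves ▸ restrictedOnlineRamsey_two_colours_upper_general (by omega)
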